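/- Let P be a vector space over a field K of characteristic not 2 or 3, with a bilinear multiplication ·. Define {X,Y} = (X·Y - Y·X)/2 and X∙Y = (X·Y + Y·X)/2. Then (P, {,}, ∙) is a Poisson algebra (i.e., {,} is a Lie bracket, ∙ is commutative associative, and the Leibniz rule {X∙Y,Z} = X∙{Y,Z} + {X,Z}∙Y holds) if and only if the associator A(X,Y,Z) = (X·Y)·Z - X·(Y·Z) satisfies 3A(X,Y,Z) = (X·Z)·Y + (Y·Z)·X - (Y·X)·Z - (Z·X)·Y for all X,Y,Z. -/

import Mathlib

variable {K : Type*} [Field K] {P : Type*} [AddCommGroup P] [Module K P]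

/-- The associator of a bilinear multiplication. -/
def assocOf (m : P →ₗ[K] P →ₗ[K] P) (X Y Z : P) : P := m (m X Y) Z - m X (m Y Z)

/-- Admissible Poisson algebra condition:
`3 A(X,Y,Z) = (X·Z)·Y + (Y·Z)·X - (Y·X)·Z - (Z·X)·Y`. -/
def IsAdmissible (m : P →ₗ[K] P →ₗ[K] P) : Prop :=
  ∀ X Y Z : P, (3 : ℤ) • assocOf m X Y Z =
    m (m X Z) Y + m (m Y Z) X - m (m Y X) Z - m (m Z X) Y

/-- The antisymmetrized bracket `{X,Y} = (X·Y - Y·X)/2`. -/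
def brOf (m : P →ₗ[K] P →ₗ[K] P) (X Y : P) : P := (2 : K)⁻¹ • (m X Y - m Y X)

/-- The symmetrized product `X∙Y = (X·Y + Y·X)/2`. -/
def bulOf (m : P →ₗ[K] P →ₗ[K] P) (X Y : P) : P := (2 : K)⁻¹ • (m X Y + m Y X)

/-- `(P, {,}, ∙)` is a Poisson algebra (Jacobi for the bracket,
associativity for the symmetric product, Leibniz rule) if and only if the
multiplication `·` satisfies the admissibility identity for the associator. -/
theorem stmt0 (h2 : (2 : K) ≠ 0) (h3 : (3 : K) ≠ 0) (m : P →ₗ[K] P →ₗ[K] P) :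
    ((∀ X Y Z : P,
        brOf m (brOf m X Y) Z + brOf m (brOf m Y Z) X + brOf m (brOf m Z X) Y = 0) ∧
      (∀ X Y Z : P, bulOf m (bulOf m X Y) Z = bulOf m X (bulOf m Y Z)) ∧
      (∀ X Y Z : P,
        brOf m (bulOf m X Y) Z = bulOf m X (brOf m Y Z) + bulOf m (brOf m X Z) Y)) ↔
      IsAdmissible m := by
  have hc : (2 : K)⁻¹ ≠ 0 := inv_ne_zero h2
  unfold IsAdmissible assocOf brOf bulOf
  generalize (2 : K)⁻¹ = c at hc ⊢
  simp only [map_add, map_sub, map_smul, LinearMap.add_apply, LinearMap.sub_apply,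
    LinearMap.smul_apply]
  constructor
  · rintro ⟨hJ, hA, hL⟩ X Y Z
    have hne : (2 : K) * (c * c) ≠ 0 := mul_ne_zero h2 (mul_ne_zero hc hc)
    apply smul_right_injective P hne
    beta_reduce
    linear_combination (norm := module) hJ X Y Z + (2 : K) • hA X Y Z + (2 : K) • hL X Y Z + hL Y Z X
  · intro hD
    refine ⟨fun X Y Z => ?_, fun X Y Z => ?_, fun X Y Z => ?_⟩ <;>
      apply smul_right_injective P h3 <;> beta_reduce
    · linear_combination (norm := module) (c * c) • (hD X Y Z - hD X Z Y - hD Y X Z + hD Y Z X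
        + hD Z X Y - hD Z Y X)
    · linear_combination (norm := module) (c * c) • (hD X Y Z + hD X Z Y - hD Z X Y - hD Z Y X)
    · linear_combination (norm := module) (c * c) • (hD X Y Z - hD X Z Y + hD Y X Z - hD Y Z X
        + hD Z X Y + hD Z Y X)
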